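/- arXiv:2010.15104 — 2 statements merged into one kernel-verified Lean document; each statement's English description precedes it below -/
import Mathlib

section
/- Comparison between the original and modified Carleman weights: for all λ > 1, μ > 1 and all (t,x) ∈ (0,T)×[0,L] one has l(t,x) ≤ m(t,x) (hence θ(t,x) ≤ σ(t,x) and θ² ≤ σ²) and ξ(t,x) ≥ ν(t,x); moreover there exists a constant C > 0 (depending on λ, μ, L, x₀ and T) such that ξ(t,x) θ(t,x)² ≤ C ν(t,x) σ(t,x)² for all (t,x) ∈ (0,T)×[0,L]. -/
/-!
Write `g = t(T-t)` and `γ = γ(t)`; then `0 < g ≤ γ ≤ T²/4` (lemma `gam_bounds`). For `x ∈ [0,L]`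
the numerator `λ(e^{3μ(x-x₀)} - e^{5μ(L-x₀)})` is negative, being at most `-d` with
`d = λ(e^{5μ(L-x₀)} - e^{3μ(L-x₀)}) > 0`. This gives `l ≤ m` and `ν ≤ ξ` at once.

For the last inequality put `s = 1/g - 1/γ ≥ 0`. The ratio of the two sides without `C` is at most
`(γ/g) e^{-2ds} = (1 + γs) e^{-2ds}`, and `e^{2ds} ≥ 1 + 2ds` bounds it by `1 + T²/(8d)`
(lemma `weight_ratio_bound`).
-/

open MeasureTheory Set

/-- Carleman weight `ξ(t,x) = e^{3μ(x-x₀)}/(t(T-t))`. -/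
noncomputable def xi (μ T x₀ t x : ℝ) : ℝ :=
  Real.exp (3 * μ * (x - x₀)) / (t * (T - t))

/-- Carleman exponent `l(t,x) = λ(e^{3μ(x-x₀)} - e^{5μ(L-x₀)})/(t(T-t))`. -/
noncomputable def lw (lam μ T L x₀ t x : ℝ) : ℝ :=
  lam * (Real.exp (3 * μ * (x - x₀)) - Real.exp (5 * μ * (L - x₀))) / (t * (T - t))

/-- Carleman weight `θ = e^l`. -/
noncomputable def th (lam μ T L x₀ t x : ℝ) : ℝ :=
  Real.exp (lw lam μ T L x₀ t x)

/-- The truncated time weight `γ(t)`. -/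
noncomputable def gam (T t : ℝ) : ℝ := if t ≤ T / 2 then t * (T - t) else T ^ 2 / 4

/-- Modified weight `ν(t,x) = e^{3μ(x-x₀)}/γ(t)`. -/
noncomputable def nuW (μ T x₀ t x : ℝ) : ℝ := Real.exp (3 * μ * (x - x₀)) / gam T t

/-- Modified exponent `m(t,x) = λ(e^{3μ(x-x₀)} - e^{5μ(L-x₀)})/γ(t)`. -/
noncomputable def mw (lam μ T L x₀ t x : ℝ) : ℝ :=
  lam * (Real.exp (3 * μ * (x - x₀)) - Real.exp (5 * μ * (L - x₀))) / gam T t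

/-- Modified weight `σ = e^m`. -/
noncomputable def sig (lam μ T L x₀ t x : ℝ) : ℝ := Real.exp (mw lam μ T L x₀ t x)

lemma gam_bounds {T t : ℝ} (ht : t ∈ Ioo (0:ℝ) T) :
    0 < t * (T - t) ∧ t * (T - t) ≤ gam T t ∧ gam T t ≤ T ^ 2 / 4 := by
  have hg : 0 < t * (T - t) := mul_pos ht.1 (by linarith [ht.2])
  have hq : t * (T - t) ≤ T ^ 2 / 4 := by nlinarith [sq_nonneg (t - T / 2)]
  unfold gam
  split_ifs
  · exact ⟨hg, le_rfl, hq⟩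
  · exact ⟨hg, hq, le_rfl⟩

/-- The numerator of `l` and `m` is bounded away from zero uniformly in `x ≤ L`. -/
lemma numerator_le {L x₀ lam μ x : ℝ} (hlam : 0 < lam) (hμ : 0 < μ) (hx : x ≤ L) :
    lam * (Real.exp (3 * μ * (x - x₀)) - Real.exp (5 * μ * (L - x₀))) ≤
      -(lam * (Real.exp (5 * μ * (L - x₀)) - Real.exp (3 * μ * (L - x₀)))) := by
  have h : Real.exp (3 * μ * (x - x₀)) ≤ Real.exp (3 * μ * (L - x₀)) := by gcongr
  nlinarith [mul_le_mul_of_nonneg_left h hlam.le]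

/-- Exponential decay absorbs the singular factor `1/g`: the constant is uniform in
`0 < g ≤ G ≤ K` and in `a ≤ -d < 0`. -/
lemma weight_ratio_bound {g G K a d : ℝ} (hg : 0 < g) (hgG : g ≤ G) (hGK : G ≤ K)
    (hd : 0 < d) (had : a ≤ -d) :
    1 / g * Real.exp (a / g) ^ 2 ≤
      (1 + K / (2 * d)) * (1 / G) * Real.exp (a / G) ^ 2 := by
  have hG : 0 < G := hg.trans_le hgG
  have hK : 0 < K := hG.trans_le hGK
  obtain ⟨s, hs⟩ : ∃ s, s = 1 / g - 1 / G := ⟨_, rfl⟩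
  have hs0 : 0 ≤ s := by
    rw [hs]; exact sub_nonneg.2 (one_div_le_one_div_of_le hg hgG)
  have hexp : 1 + 2 * d * s ≤ Real.exp (2 * d * s) := by
    linarith [Real.add_one_le_exp (2 * d * s)]
  have hKd : K / (2 * d) * (2 * d) = K := by field_simp
  have hKd0 : 0 ≤ K / (2 * d) := by positivity
  have hfac : 1 / g = (1 + G * s) * (1 / G) := by
    rw [hs]; field_simp; ring
  have hpoly : 1 + G * s ≤ (1 + K / (2 * d)) * (1 + 2 * d * s) := by
    have h1 : G * s ≤ K * s := by gcongr
    have h2 : (1 + K / (2 * d)) * (1 + 2 * d * s)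
        = 1 + K / (2 * d) + 2 * d * s + K / (2 * d) * (2 * d) * s := by ring
    rw [h2, hKd]
    have h3 : 0 ≤ 2 * d * s := by positivity
    linarith
  have hdecay : Real.exp (2 * d * s) * Real.exp (a / g) ^ 2 ≤ Real.exp (a / G) ^ 2 := by
    rw [← Real.exp_nat_mul, ← Real.exp_nat_mul, ← Real.exp_add]
    apply Real.exp_le_exp.2
    have h1 : a / g = a / G + a * s := by rw [hs]; ring
    have h2 : a * s ≤ -d * s := by gcongr
    rw [h1]; push_cast; linarith
  calc 1 / g * Real.exp (a / g) ^ 2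
      = (1 + G * s) * ((1 / G) * Real.exp (a / g) ^ 2) := by rw [hfac]; ring
    _ ≤ ((1 + K / (2 * d)) * Real.exp (2 * d * s)) * ((1 / G) * Real.exp (a / g) ^ 2) := by
        gcongr
        exact hpoly.trans (by gcongr)
    _ = (1 + K / (2 * d)) * (1 / G) * (Real.exp (2 * d * s) * Real.exp (a / g) ^ 2) := by ring
    _ ≤ _ := by gcongr

/-- Comparison between the original Carleman weights `(ξ, l, θ)` and the modified weights
`(ν, m, σ)`: `l ≤ m` (hence `θ ≤ σ` and `θ² ≤ σ²`), `ν ≤ ξ`, and `ξθ² ≤ C ν σ²`. -/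
theorem comparison_original_modified_weights
    (L T x₀ : ℝ) (hL : 0 < L) (hT : 0 < T) (hx₀ : x₀ < 0)
    (lam μ : ℝ) (hlam : 1 < lam) (hμ : 1 < μ) :
    (∀ t ∈ Ioo (0:ℝ) T, ∀ x ∈ Icc (0:ℝ) L,
      lw lam μ T L x₀ t x ≤ mw lam μ T L x₀ t x ∧
      th lam μ T L x₀ t x ≤ sig lam μ T L x₀ t x ∧
      th lam μ T L x₀ t x ^ 2 ≤ sig lam μ T L x₀ t x ^ 2 ∧
      nuW μ T x₀ t x ≤ xi μ T x₀ t x) ∧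
    ∃ C > (0:ℝ), ∀ t ∈ Ioo (0:ℝ) T, ∀ x ∈ Icc (0:ℝ) L,
      xi μ T x₀ t x * th lam μ T L x₀ t x ^ 2
        ≤ C * nuW μ T x₀ t x * sig lam μ T L x₀ t x ^ 2 := by
  have hd : 0 < lam * (Real.exp (5 * μ * (L - x₀)) - Real.exp (3 * μ * (L - x₀))) := by
    apply mul_pos (by linarith)
    apply sub_pos.2
    apply Real.exp_lt_exp.2
    nlinarith [mul_pos (show 0 < μ by linarith) (show 0 < L - x₀ by linarith)]
  refine ⟨fun t ht x hx => ?_, 1 + T ^ 2 / 4 /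
    (2 * (lam * (Real.exp (5 * μ * (L - x₀)) - Real.exp (3 * μ * (L - x₀))))),
    by positivity, fun t ht x hx => ?_⟩
  · obtain ⟨hg, hgG, -⟩ := gam_bounds ht
    have hnum := numerator_le (x₀ := x₀) (show 0 < lam by linarith) (show 0 < μ by linarith) hx.2
    have hlm : lw lam μ T L x₀ t x ≤ mw lam μ T L x₀ t x := by
      unfold lw mw
      have h := div_le_div_of_nonneg_left (neg_nonneg.2 (hnum.trans (neg_nonpos.2 hd.le))) hg hgG
      rw [neg_div, neg_div] at h
      exact neg_le_neg_iff.1 h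
    have hts : th lam μ T L x₀ t x ≤ sig lam μ T L x₀ t x := Real.exp_le_exp.2 hlm
    exact ⟨hlm, hts, pow_le_pow_left₀ (Real.exp_pos _).le hts 2,
      div_le_div_of_nonneg_left (Real.exp_pos _).le hg hgG⟩
  · obtain ⟨hg, hgG, hGK⟩ := gam_bounds ht
    have hnum := numerator_le (x₀ := x₀) (show 0 < lam by linarith) (show 0 < μ by linarith) hx.2
    have h := mul_le_mul_of_nonneg_left (weight_ratio_bound hg hgG hGK hd hnum)
      (Real.exp_pos (3 * μ * (x - x₀))).le
    unfold xi nuW th sig lw mw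
    refine le_of_eq_of_le ?_ (h.trans_eq ?_) <;> ring
end

section
/- Time-derivative bound for the maximal modified weights: let ν̂(t) = max_{x∈[0,L]} ν(t,x) = e^{3μ(L−x₀)}/γ(t), m̂(t) = max_{x∈[0,L]} m(t,x) = λ(e^{3μ(L−x₀)} − e^{5μ(L−x₀)})/γ(t) and σ̂(t) = e^{m̂(t)}. Then the function t ↦ ν̂(t)^{-2} σ̂(t)^{-1} is differentiable on (0,T), and there exists a constant C > 0 depending only on μ, L, x₀ and T such that for every λ > 1 and every t ∈ (0,T), |d/dt ( ν̂(t)^{-2} σ̂(t)^{-1} )| ≤ C λ σ̂(t)^{-1}. -/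
/-!
With `a = e^{3μ(L-x₀)}` and `m̂ = k / γ`, `k = λ(e^{3μ(L-x₀)} - e^{5μ(L-x₀)})`, the function is
`a⁻² γ² e^{-k/γ}`, whose derivative is `a⁻² (2γ + k) γ' e^{-k/γ}` (`weight_hasDerivAt`): the factor `γ²` absorbs the
singularity `γ⁻²` coming from the derivative of the exponent. The two branches of `γ` meet at
`T/2` with equal values and zero slopes, so `γ` is differentiable on `(0,T)` (`gam_hasDerivAt`); there
`0 < γ ≤ T²/4` and `|γ'| ≤ T`, and `λ > 1` lets the `λ`-free term be bounded by a multiple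
of `λ`.
-/

open MeasureTheory Set

/-- The maximal modified weight `ν̂(t) = max_x ν(t,x) = e^{3μ(L-x₀)}/γ(t)`. -/
noncomputable def nuh (μ T L x₀ t : ℝ) : ℝ := Real.exp (3 * μ * (L - x₀)) / gam T t

/-- The maximal modified exponent
`m̂(t) = max_x m(t,x) = λ(e^{3μ(L-x₀)} - e^{5μ(L-x₀)})/γ(t)`. -/
noncomputable def mh (lam μ T L x₀ t : ℝ) : ℝ :=
  lam * (Real.exp (3 * μ * (L - x₀)) - Real.exp (5 * μ * (L - x₀))) / gam T t

/-- The maximal modified weight `σ̂ = e^{m̂}`. -/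
noncomputable def sigh (lam μ T L x₀ t : ℝ) : ℝ := Real.exp (mh lam μ T L x₀ t)

lemma gam_pos {T t : ℝ} (ht : t ∈ Ioo (0:ℝ) T) : 0 < gam T t := by
  have h0 := ht.1
  have h1 : 0 < T - t := sub_pos.2 ht.2
  have hT : 0 < T := ht.1.trans ht.2
  unfold gam
  split_ifs <;> positivity

lemma gam_le (T t : ℝ) : gam T t ≤ T ^ 2 / 4 := by
  unfold gam
  split_ifs
  · nlinarith [sq_nonneg (T / 2 - t)]
  · exact le_rfl

lemma gam_hasDerivAt {T t : ℝ} (ht : t ∈ Ioo (0:ℝ) T) :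
    ∃ g, |g| ≤ T ∧ HasDerivAt (gam T) g t := by
  have hT : 0 < T := ht.1.trans ht.2
  have hquad : HasDerivAt (fun s : ℝ => s * (T - s)) (T - 2 * t) t := by
    have h := (hasDerivAt_id' t).mul ((hasDerivAt_id' t).const_sub T)
    exact h.congr_deriv (by ring)
  have hconst : HasDerivAt (fun _ : ℝ => T ^ 2 / 4) 0 t := hasDerivAt_const t _
  rcases lt_trichotomy t (T / 2) with h | h | h
  · refine ⟨T - 2 * t, abs_le.2 ⟨by linarith [ht.2], by linarith [ht.1]⟩, ?_⟩
    refine hquad.congr_of_eventuallyEq ?_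
    filter_upwards [Iio_mem_nhds h] with s hs
    exact if_pos (le_of_lt hs)
  · -- both one-sided derivatives vanish at the junction
    refine ⟨0, by simpa using hT.le, ?_⟩
    have hleft : HasDerivWithinAt (gam T) 0 (Iic t) t := by
      have hz : T - 2 * t = 0 := by rw [h]; ring
      rw [hz] at hquad
      refine hquad.hasDerivWithinAt.congr_of_mem (fun s hs => ?_) self_mem_Iic
      exact if_pos (h ▸ hs)
    have hright : HasDerivWithinAt (gam T) 0 (Ici t) t := by
      refine hconst.hasDerivWithinAt.congr_of_mem (fun s hs => ?_) self_mem_Ici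
      unfold gam
      split_ifs with hs'
      · have : s = T / 2 := le_antisymm hs' (h ▸ hs)
        rw [this]; ring
      · rfl
    have := hleft.union hright
    rwa [Iic_union_Ici, hasDerivWithinAt_univ] at this
  · refine ⟨0, by simpa using hT.le, ?_⟩
    refine hconst.congr_of_eventuallyEq ?_
    filter_upwards [Ioi_mem_nhds h] with s hs
    exact if_neg (not_le.2 hs)

lemma weight_hasDerivAt (lam μ L x₀ : ℝ) {T t g : ℝ} (ht : t ∈ Ioo (0:ℝ) T)
    (hg : HasDerivAt (gam T) g t) :
    HasDerivAt (fun s => (nuh μ T L x₀ s ^ 2)⁻¹ * (sigh lam μ T L x₀ s)⁻¹)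
      ((Real.exp (3 * μ * (L - x₀)) ^ 2)⁻¹ * ((2 * gam T t
        + lam * (Real.exp (3 * μ * (L - x₀)) - Real.exp (5 * μ * (L - x₀)))) * g)
        * (sigh lam μ T L x₀ t)⁻¹) t := by
  have hγ := (gam_pos ht).ne'
  unfold sigh mh nuh
  have ha : Real.exp (3 * μ * (L - x₀)) ≠ 0 := (Real.exp_pos _).ne'
  generalize Real.exp (3 * μ * (L - x₀)) = a at *
  generalize lam * (a - Real.exp (5 * μ * (L - x₀))) = k
  have hexp := ((((hasDerivAt_const t k).div hg hγ).neg).exp)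
  have h := ((hg.pow 2).const_mul (a ^ 2)⁻¹).mul hexp
  simp only [← Real.exp_neg]
  refine (h.congr_deriv ?_).congr_of_eventuallyEq (Filter.Eventually.of_forall fun s => ?_)
  · simp only [Pi.neg_apply, Pi.div_apply, Pi.pow_apply]
    field_simp
    push_cast
    ring
  · simp [div_eq_mul_inv, mul_pow, mul_comm]

/-- Time-derivative bound for the maximal modified weights: `t ↦ ν̂(t)⁻² σ̂(t)⁻¹` is
differentiable on `(0,T)` and `|d/dt(ν̂⁻² σ̂⁻¹)| ≤ C λ σ̂⁻¹` with `C` depending only on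
`μ`, `L`, `x₀` and `T`. -/
theorem time_derivative_bound_maximal_modified_weight
    (L T x₀ μ : ℝ) (hL : 0 < L) (hT : 0 < T) (hx₀ : x₀ < 0) (hμ : 1 < μ) :
    (∀ lam : ℝ, 1 < lam → ∀ t ∈ Ioo (0:ℝ) T,
      DifferentiableAt ℝ (fun s => (nuh μ T L x₀ s ^ 2)⁻¹ * (sigh lam μ T L x₀ s)⁻¹) t) ∧
    ∃ C > (0:ℝ), ∀ lam : ℝ, 1 < lam → ∀ t ∈ Ioo (0:ℝ) T,
      |deriv (fun s => (nuh μ T L x₀ s ^ 2)⁻¹ * (sigh lam μ T L x₀ s)⁻¹) t|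
        ≤ C * lam * (sigh lam μ T L x₀ t)⁻¹ := by
  refine ⟨fun lam _ t ht => ?_, ?_⟩
  · obtain ⟨g, -, hg⟩ := gam_hasDerivAt ht
    exact (weight_hasDerivAt lam μ L x₀ ht hg).differentiableAt
  have ha : 0 < Real.exp (3 * μ * (L - x₀)) := Real.exp_pos _
  refine ⟨(Real.exp (3 * μ * (L - x₀)) ^ 2)⁻¹ * ((T ^ 2 / 2
    + |Real.exp (3 * μ * (L - x₀)) - Real.exp (5 * μ * (L - x₀))|) * T), by positivity,
    fun lam hlam t ht => ?_⟩
  obtain ⟨g, hgT, hg⟩ := gam_hasDerivAt ht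
  rw [(weight_hasDerivAt lam μ L x₀ ht hg).deriv]
  have hσ : 0 < (sigh lam μ T L x₀ t)⁻¹ := inv_pos.2 (Real.exp_pos _)
  generalize Real.exp (3 * μ * (L - x₀)) = a at *
  generalize a - Real.exp (5 * μ * (L - x₀)) = d
  have hγ := gam_pos ht
  have hγ' := gam_le T t
  have hlam0 : 0 < lam := by linarith
  have hsum : |2 * gam T t + lam * d| ≤ lam * (T ^ 2 / 2 + |d|) := by
    calc |2 * gam T t + lam * d| ≤ |2 * gam T t| + |lam * d| := abs_add_le _ _
      _ = 2 * gam T t + lam * |d| := by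
        rw [abs_mul lam, abs_of_pos hlam0, abs_of_pos (by positivity)]
      _ ≤ lam * (T ^ 2 / 2 + |d|) := by nlinarith [sq_nonneg T]
  rw [abs_mul, abs_of_pos hσ, abs_mul, abs_of_pos (by positivity : 0 < (a ^ 2)⁻¹), abs_mul]
  calc (a ^ 2)⁻¹ * (|2 * gam T t + lam * d| * |g|) * (sigh lam μ T L x₀ t)⁻¹
      ≤ (a ^ 2)⁻¹ * (lam * (T ^ 2 / 2 + |d|) * T) * (sigh lam μ T L x₀ t)⁻¹ := by gcongr
    _ = _ := by ring
end
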